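/- arXiv:2601.08715 — 2 statements merged into one kernel-verified Lean document; each statement's English description precedes it below -/
import Mathlib

section
/- Let n ≥ 4, s = [n n-1 … 1], r = (1 2 … n), δ = (1 2) in S_n, and dist the word metric with respect to {δ, r, r^{-1}}. For every integer i with ⌈n/2⌉ + 2 ≤ i ≤ n, dist(s r^{n-i}, 1) = ⌈n/2⌉(⌈n/2⌉-1) - 1 + ⌊n/2⌋(⌊n/2⌋-1) - 1 + i - ⌈n/2⌉. -/
/-- The transposition `δ = (1 2)` in `S_n` (0-indexed: swaps `0` and `1`). -/
def delta (n : ℕ) (hn : 2 ≤ n) : Equiv.Perm (Fin n) :=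
  Equiv.swap ⟨0, by omega⟩ ⟨1, by omega⟩

/-- The symmetric generating set `{(1 2), (1 2 … n), (1 n … 2)}` of `S_n`. -/
def gens (n : ℕ) (hn : 2 ≤ n) : Set (Equiv.Perm (Fin n)) :=
  {delta n hn, finRotate n, (finRotate n)⁻¹}

/-- `IsMinWordLen n hn g d` says that `d` is the minimal length of a word in the
generators `{(1 2), (1 2 … n), (1 n … 2)}` whose product is `g`; i.e. the distance
in the Cayley graph from `1` to `g` is exactly `d`. -/
def IsMinWordLen (n : ℕ) (hn : 2 ≤ n) (g : Equiv.Perm (Fin n)) (d : ℕ) : Prop :=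
  (∃ l : List (Equiv.Perm (Fin n)),
      (∀ x ∈ l, x ∈ gens n hn) ∧ l.prod = g ∧ l.length = d) ∧
  (∀ l : List (Equiv.Perm (Fin n)),
      (∀ x ∈ l, x ∈ gens n hn) → l.prod = g → d ≤ l.length)

/-!
Regard the points of the circle as tokens and the positions `0, 1`, where `δ` acts, as a window
moving along it; the target is a reflection `z ↦ c - z`.

The swaps and the moves of a word are bounded separately. A letter `δ` only affects the cyclic order
of triples containing both tokens it exchanges, whereas the reflection reverses every triple, so
the pairs never exchanged form a triangle-free graph and Mantel's theorem bounds the swaps from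
below. For the moves, identify the two positions of the window: swaps then fix every token in the
resulting cycle of length `n - 1`, and each move displaces by one step just the token the window
passes. The window travels at least half-way round, so the word can be cut at a moment when it
stands at a well-chosen place in between, and the number of moves is bounded below by the total
distance on the cycle from the configuration at that moment to those at the two ends.

Both bounds are attained by reversing two complementary half-circles one after the other, each by
carrying its tokens to their places alternately from the left and from the right.
-/

section CircNorm

open Finset

/-- Distance from `x` to `0` on the cycle `ZMod M`. -/
def circNorm {M : ℕ} (x : ZMod M) : ℕ := x.valMinAbs.natAbs

variable {M : ℕ}

theorem circNorm_natCast {j : ℕ} (hj : j < M) : circNorm (j : ZMod M) = min j (M - j) := by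
  have : NeZero M := ⟨by omega⟩
  rw [circNorm, ZMod.valMinAbs_natAbs_eq_min, ZMod.val_natCast_of_lt hj]

theorem circNorm_add_le (x y : ZMod M) : circNorm (x + y) ≤ circNorm x + circNorm y :=
  (ZMod.natAbs_valMinAbs_add_le x y).trans (Int.natAbs_add_le _ _)

theorem circNorm_neg (x : ZMod M) : circNorm (-x) = circNorm x :=
  ZMod.natAbs_valMinAbs_neg x

theorem circNorm_sub_le (x y : ZMod M) : circNorm (x - y) ≤ circNorm x + circNorm y := by
  simpa only [sub_eq_add_neg, circNorm_neg] using circNorm_add_le x (-y)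

theorem circNorm_zero : circNorm (0 : ZMod M) = 0 := by
  rw [circNorm, ZMod.valMinAbs_zero, Int.natAbs_zero]

theorem circNorm_one_le : circNorm (1 : ZMod M) ≤ 1 := by
  rcases lt_or_ge 1 M with hM | hM
  · simpa using (circNorm_natCast hM).trans_le (min_le_left 1 _)
  · interval_cases M <;> decide

theorem circNorm_two_mul_natCast (f j : ℕ) [NeZero f] :
    circNorm (2 * (j : ZMod (2 * f))) = 2 * circNorm (j : ZMod f) := by
  have hcast : 2 * (j : ZMod (2 * f)) = ((2 * j : ℕ) : ZMod (2 * f)) := by push_cast; rfl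
  rw [hcast, circNorm, circNorm, ZMod.valMinAbs_natAbs_eq_min,
    ZMod.valMinAbs_natAbs_eq_min, ZMod.val_natCast, ZMod.val_natCast, Nat.mul_mod_mul_left]
  omega

theorem odd_circNorm_two_mul_add_one (f k : ℕ) [NeZero f] :
    Odd (circNorm (2 * (k : ZMod (2 * f)) + 1)) := by
  have hlt : (2 * k + 1) % (2 * f) < 2 * f := Nat.mod_lt _ (NeZero.pos _)
  have hodd : (2 * k + 1) % (2 * f) % 2 = 1 := by
    rw [Nat.mod_mod_of_dvd _ (dvd_mul_right 2 f)]
    omega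
  have hcast : 2 * (k : ZMod (2 * f)) + 1 = ((2 * k + 1 : ℕ) : ZMod (2 * f)) := by push_cast; rfl
  rw [hcast, circNorm, ZMod.valMinAbs_natAbs_eq_min, ZMod.val_natCast, Nat.odd_iff]
  omega

theorem sum_zmod_eq_sum_range {β : Type*} [AddCommMonoid β] (M : ℕ) [NeZero M] (F : ZMod M → β) :
    ∑ x, F x = ∑ j ∈ range M, F j := by
  obtain ⟨k, rfl⟩ := Nat.exists_eq_succ_of_ne_zero (NeZero.ne M)
  rw [← Fin.sum_univ_eq_sum_range (fun j => F j)]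
  exact sum_congr rfl fun x _ => congrArg F (ZMod.natCast_zmod_val (n := k + 1) x).symm

theorem sum_range_min_sub (M : ℕ) : ∑ j ∈ range M, min j (M - j) = M ^ 2 / 4 := by
  induction M using Nat.twoStepInduction with
  | zero => rfl
  | one => rfl
  | more M ih _ =>
    have hshift : ∀ j ∈ range (M + 1), min (j + 1) (M + 2 - (j + 1)) = min j (M - j) + 1 := by
      intro j hj
      have := mem_range.1 hj
      omega
    have hsq : (M + 2) ^ 2 = M ^ 2 + 4 * (M + 1) := by ring
    rw [sum_range_succ', sum_congr rfl hshift, sum_add_distrib, sum_range_succ, ih, hsq,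
      Nat.add_mul_div_left _ _ four_pos]
    simp

theorem sum_circNorm (M : ℕ) [NeZero M] : ∑ x : ZMod M, circNorm x = M ^ 2 / 4 := by
  rw [sum_zmod_eq_sum_range, ← sum_range_min_sub]
  exact sum_congr rfl fun j hj => circNorm_natCast (mem_range.1 hj)

theorem sum_range_two_mul {β : Type*} [AddCommMonoid β] (h : ℕ → β) (K : ℕ) :
    ∑ j ∈ range (2 * K), h j = ∑ j ∈ range K, (h (2 * j) + h (2 * j + 1)) := by
  induction K with
  | zero => rfl
  | succ K ih => rw [mul_add_one, sum_range_succ, sum_range_succ, sum_range_succ, ih, add_assoc]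

theorem sum_range_two_mul_natCast (M : ℕ) [NeZero M] (F : ZMod M → ℕ) :
    ∑ j ∈ range (2 * M), F j = 2 * ∑ x, F x := by
  simp only [two_mul M, sum_range_add, Nat.cast_add, CharP.cast_eq_zero, zero_add,
    sum_zmod_eq_sum_range M F, two_mul]

/-- The sum of `circNorm` over the progression `C, C + 2, …, C + 2 (M - 1)`, which winds twice
around the cycle. -/
def doubleSum {M : ℕ} [NeZero M] (C : ZMod M) : ℕ := ∑ x : ZMod M, circNorm (C + 2 * x)

theorem doubleSum_add_two_mul [NeZero M] (C k : ZMod M) :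
    doubleSum (C + 2 * k) = doubleSum C := by
  simp only [doubleSum, add_assoc, ← mul_add]
  exact Equiv.sum_comp (Equiv.addLeft k) fun x => circNorm (C + 2 * x)

theorem doubleSum_of_odd [NeZero M] (hM : Odd M) (C : ZMod M) : doubleSum C = M ^ 2 / 4 := by
  have h2 : IsUnit (2 : ZMod M) := by
    simpa using (ZMod.isUnit_iff_coprime 2 M).2 (Nat.coprime_two_left.2 hM)
  rw [← sum_circNorm, doubleSum]
  exact Fintype.sum_equiv (h2.unit.mulLeft.trans (Equiv.addLeft C)) _ _ fun x => by simp

theorem doubleSum_zero (f : ℕ) [NeZero f] : doubleSum (0 : ZMod (2 * f)) = 4 * (f ^ 2 / 4) := by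
  simp only [doubleSum, zero_add, sum_zmod_eq_sum_range, circNorm_two_mul_natCast, ← mul_sum]
  rw [sum_range_two_mul_natCast f circNorm, sum_circNorm]
  ring

theorem doubleSum_add_doubleSum_add_one [NeZero M] (C : ZMod M) :
    doubleSum C + doubleSum (C + 1) = 2 * (M ^ 2 / 4) := by
  have hall := sum_range_two_mul_natCast M fun x => circNorm (C + x)
  have hshift : ∑ x, circNorm (C + x) = M ^ 2 / 4 :=
    (Equiv.sum_comp (Equiv.addLeft C) circNorm).trans (sum_circNorm M)
  rw [hshift, sum_range_two_mul, sum_add_distrib] at hall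
  rw [← hall, doubleSum, doubleSum, sum_zmod_eq_sum_range, sum_zmod_eq_sum_range]
  simp only [Nat.cast_add, Nat.cast_mul, Nat.cast_ofNat, Nat.cast_one, add_assoc, add_comm]

theorem doubleSum_two_mul (f : ℕ) [NeZero f] (k : ZMod (2 * f)) :
    doubleSum (2 * k) = 4 * (f ^ 2 / 4) := by
  rw [← zero_add (2 * k), doubleSum_add_two_mul, doubleSum_zero]

theorem sq_div_four_le_doubleSum_add [NeZero M] {C : ZMod M}
    (hC : (M + 1) / 2 ≤ circNorm (C + 1) + 1) :
    (M + 1) ^ 2 / 4 ≤ doubleSum C + circNorm (C + 1) + 1 := by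
  have hstep : (M + 1) ^ 2 / 4 ≤ M ^ 2 / 4 + (M + 1) / 2 := by
    rcases Nat.even_or_odd' M with ⟨f, rfl | rfl⟩
    · have h₀ : (2 * f) ^ 2 = 4 * f ^ 2 := by ring
      have h₁ : (2 * f + 1) ^ 2 = 1 + 4 * (f ^ 2 + f) := by ring
      omega
    · have h₀ : (2 * f + 1) ^ 2 = 1 + 4 * (f ^ 2 + f) := by ring
      have h₁ : (2 * f + 1 + 1) ^ 2 = 4 * (f ^ 2 + 2 * f + 1) := by ring
      omega
  rcases Nat.even_or_odd' M with ⟨f, rfl | rfl⟩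
  · have : NeZero f := ⟨by rintro rfl; exact NeZero.ne (2 * 0) rfl⟩
    obtain ⟨j, rfl⟩ := ZMod.natCast_zmod_surjective C
    have hsq : (2 * f) ^ 2 = 4 * f ^ 2 := by ring
    rcases Nat.even_or_odd' j with ⟨k, rfl | rfl⟩
    · have hcast : ((2 * k : ℕ) : ZMod (2 * f)) = 2 * k := by push_cast; rfl
      rw [hcast] at hC ⊢
      obtain ⟨c, hc⟩ := odd_circNorm_two_mul_add_one f k
      have hmod : f ^ 2 % 4 = f % 2 := by
        rcases Nat.even_or_odd' f with ⟨g, rfl | rfl⟩ <;> ring_nf <;> omega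
      rw [doubleSum_two_mul]
      omega
    · have hcast : ((2 * k + 1 : ℕ) : ZMod (2 * f)) + 1 = 2 * (k + 1) := by push_cast; ring
      have hadd := doubleSum_add_doubleSum_add_one ((2 * k + 1 : ℕ) : ZMod (2 * f))
      rw [hcast] at hadd
      rw [doubleSum_two_mul] at hadd
      omega
  · rw [doubleSum_of_odd ⟨f, rfl⟩]
    omega

theorem exists_le_circNorm_add_two_mul [NeZero M] (x : ZMod M) :
    ∃ k < (M + 1) / 2, (M + 1) / 2 ≤ circNorm (x + 2 * (k : ZMod M)) + 1 := by
  obtain ⟨r, hr, rfl⟩ : ∃ r < M, x = ((M + 1) / 2 - 1 + r : ℕ) := by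
    refine ⟨(x - ((M + 1) / 2 - 1 : ℕ)).val, ZMod.val_lt _, ?_⟩
    rw [Nat.cast_add, ZMod.natCast_zmod_val, add_sub_cancel]
  rcases lt_or_ge r 2 with hr₂ | hr₂
  · refine ⟨0, by omega, ?_⟩
    rw [Nat.cast_zero, mul_zero, add_zero, circNorm_natCast (by omega)]
    omega
  · refine ⟨(M - r + 1) / 2, by omega, ?_⟩
    have hcast : (((M + 1) / 2 - 1 + r : ℕ) : ZMod M) + 2 * ((M - r + 1) / 2 : ℕ) =
        ((M + 1) / 2 - 1 + (M + r) % 2 : ℕ) := by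
      have hnat : (M + 1) / 2 - 1 + r + 2 * ((M - r + 1) / 2) =
          (M + 1) / 2 - 1 + (M + r) % 2 + M := by omega
      simpa using congrArg (Nat.cast : ℕ → ZMod M) hnat
    rw [hcast, circNorm_natCast (by omega)]
    omega

end CircNorm

/-- The generators `r`, `r⁻¹` and `δ`, as the alphabet in which words are written. -/
inductive Letter
  | rot
  | rotInv
  | swap
  deriving DecidableEq

namespace Letter

/-- The generator named by a letter, as a permutation of the `m + 2` positions. -/
def perm (m : ℕ) : Letter → Equiv.Perm (Fin (m + 2))
  | rot => finRotate (m + 2)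
  | rotInv => (finRotate (m + 2))⁻¹
  | swap => Equiv.swap 0 1

/-- The motion of the window of positions `0, 1` relative to the tokens: applying `r` carries every
token one step forward, which is recorded as a step of the window backwards. -/
def shift : Letter → ℤ
  | rot => -1
  | rotInv => 1
  | swap => 0

end Letter

/-- The product of a word. Tokens sitting at the positions are moved by the last letter first. -/
def wordPerm (m : ℕ) (w : List Letter) : Equiv.Perm (Fin (m + 2)) :=
  (w.map (Letter.perm m)).prod

/-- The total motion of the window along a word. -/
def headPos (w : List Letter) : ℤ := (w.map Letter.shift).sum

/-- The number of letters `r` and `r⁻¹` of a word. -/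
def moves (w : List Letter) : ℕ := w.countP (· ≠ .swap)

theorem count_swap_add_moves (w : List Letter) : w.count .swap + moves w = w.length := by
  simp [w.length_eq_countP_add_countP (· == .swap), moves, List.count]

theorem headPos_cons (a : Letter) (w : List Letter) : headPos (a :: w) = a.shift + headPos w :=
  List.sum_cons

theorem headPos_append (u v : List Letter) : headPos (u ++ v) = headPos u + headPos v := by
  simp [headPos]

theorem moves_cons (a : Letter) (w : List Letter) :
    moves (a :: w) = moves w + if a = .swap then 0 else 1 := by
  cases a <;> simp [moves]

theorem moves_append (u v : List Letter) : moves (u ++ v) = moves u + moves v :=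
  List.countP_append

section Word

variable {m : ℕ}

namespace Letter

theorem perm_rot_apply (p : Fin (m + 2)) : rot.perm m p = p + 1 := finRotate_apply p

theorem perm_rotInv_apply (p : Fin (m + 2)) : rotInv.perm m p = p - 1 :=
  finRotate_symm_apply p

end Letter

theorem wordPerm_cons_apply (a : Letter) (w : List Letter) (x : Fin (m + 2)) :
    wordPerm m (a :: w) x = a.perm m (wordPerm m w x) := by
  simp [wordPerm]

theorem wordPerm_append_apply (u v : List Letter) (x : Fin (m + 2)) :
    wordPerm m (u ++ v) x = wordPerm m u (wordPerm m v x) := by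
  simp [wordPerm]

end Word

section Swaps

open Finset

variable {m : ℕ}

/-- The pairs of tokens that are exchanged by some letter `δ` of the word. -/
def swappedPairs (m : ℕ) : List Letter → Finset (Sym2 (Fin (m + 2)))
  | [] => ∅
  | .swap :: w => insert s((wordPerm m w).symm 0, (wordPerm m w).symm 1) (swappedPairs m w)
  | _ :: w => swappedPairs m w

theorem card_swappedPairs_le (w : List Letter) : #(swappedPairs m w) ≤ w.count .swap := by
  induction w with
  | nil => exact le_rfl
  | cons a w ih =>
    cases a with
    | swap => exact (card_insert_le _ _).trans (by simpa using ih)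
    | rot => exact ih.trans (by simp)
    | rotInv => exact ih.trans (by simp)

theorem sbtw_add_one_iff (a b c : Fin (m + 2)) :
    sbtw (a + 1) (b + 1) (c + 1) ↔ sbtw a b c := by
  simp only [Fin.sbtw_iff, Fin.lt_def, Fin.val_add_one, Fin.ext_iff, Fin.val_last]
  split_ifs <;> omega

theorem sbtw_sub_left_iff (k a b c : Fin (m + 2)) :
    sbtw (k - a) (k - b) (k - c) ↔ sbtw c b a := by
  have hval (x : Fin (m + 2)) : (k - x).val = if x ≤ k then k.val - x.val else m + 2 + k - x := by
    split_ifs with h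
    · exact Fin.sub_val_of_le h
    · rw [Fin.coe_sub_iff_lt.2 (not_le.1 h)]
  simp only [Fin.sbtw_iff, Fin.lt_def, hval, Fin.le_def]
  split_ifs <;> omega

theorem sbtw_swap_iff {a b c : Fin (m + 2)} (hab : s(a, b) ≠ s(0, 1)) (hbc : s(b, c) ≠ s(0, 1))
    (hca : s(c, a) ≠ s(0, 1)) :
    sbtw (Equiv.swap 0 1 a) (Equiv.swap 0 1 b) (Equiv.swap 0 1 c) ↔ sbtw a b c := by
  simp only [ne_eq, Sym2.eq_iff, Fin.ext_iff, Fin.val_zero, Fin.val_one] at hab hbc hca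
  simp only [Fin.sbtw_iff, Fin.lt_def, Equiv.swap_apply_def, Fin.ext_iff, Fin.val_zero, Fin.val_one]
  split_ifs <;> simp only [Fin.val_zero, Fin.val_one] <;> omega

theorem sbtw_iff_not_sbtw_of_ne {α : Type*} [CircularOrder α] {a b c : α} (hab : a ≠ b)
    (hbc : b ≠ c) (hca : c ≠ a) : sbtw a b c ↔ ¬ sbtw c b a := by
  rw [sbtw_iff_not_btw, sbtw_iff_btw_not_btw, not_and, not_not]
  refine ⟨fun h h' => absurd h' h, fun h h' => ?_⟩
  rcases btw_antisymm (h h') h' with h | h | h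
  exacts [hab h, hbc h, hca h]

theorem sbtw_wordPerm_iff (w : List Letter) {a b c : Fin (m + 2)}
    (hab : s(a, b) ∉ swappedPairs m w) (hbc : s(b, c) ∉ swappedPairs m w)
    (hca : s(c, a) ∉ swappedPairs m w) :
    sbtw (wordPerm m w a) (wordPerm m w b) (wordPerm m w c) ↔ sbtw a b c := by
  induction w with
  | nil => rfl
  | cons l w ih =>
    simp only [wordPerm_cons_apply]
    cases l with
    | rot => simpa only [Letter.perm_rot_apply, sbtw_add_one_iff] using ih hab hbc hca
    | rotInv =>
      simpa only [Letter.perm_rotInv_apply, ← sbtw_add_one_iff (_ - 1), sub_add_cancel] using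
        ih hab hbc hca
    | swap =>
      simp only [swappedPairs, mem_insert, not_or] at hab hbc hca
      have himage {x y : Fin (m + 2)}
          (hxy : s(x, y) ≠ s((wordPerm m w).symm 0, (wordPerm m w).symm 1)) :
          s(wordPerm m w x, wordPerm m w y) ≠ s(0, 1) := fun h => hxy <| by
        simpa using congrArg (Sym2.map (wordPerm m w).symm) h
      rw [← ih hab.2 hbc.2 hca.2]
      exact sbtw_swap_iff (himage hab.1) (himage hbc.1) (himage hca.1)

theorem choose_two_le_card_add_sq_div_four {V : Type*} [Fintype V] (S : Finset (Sym2 V))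
    (hS : ∀ a b c, a ≠ b → b ≠ c → c ≠ a → s(a, b) ∈ S ∨ s(b, c) ∈ S ∨ s(c, a) ∈ S) :
    (Fintype.card V).choose 2 ≤ #S + Fintype.card V ^ 2 / 4 := by
  classical
  let G : SimpleGraph V := (⊤ : SimpleGraph V).deleteEdges (S : Set (Sym2 V))
  have hG : G.CliqueFree 3 := by
    intro t ht
    obtain ⟨a, b, c, hab, hac, hbc, -⟩ := SimpleGraph.is3Clique_iff.1 ht
    simp only [G, SimpleGraph.deleteEdges_adj, SimpleGraph.top_adj, Finset.mem_coe] at hab hac hbc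
    rcases hS a b c hab.1 hbc.1 hac.1.symm with h | h | h
    exacts [hab.2 h, hbc.2 h, hac.2 (Sym2.eq_swap ▸ h)]
  have hedges : G.edgeFinset = (⊤ : SimpleGraph V).edgeFinset \ S := by
    ext e
    simp [G]
  have hdiff : (Fintype.card V).choose 2 - #S ≤ #G.edgeFinset := by
    rw [hedges, ← SimpleGraph.card_edgeFinset_top_eq_card_choose_two]
    exact le_card_sdiff _ _
  have hmantel : #G.edgeFinset ≤ Fintype.card V ^ 2 / 4 := by
    refine hG.card_edgeFinset_le.trans ?_
    rw [Nat.choose_eq_zero_of_lt (Nat.mod_lt _ two_pos)]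
    exact (Nat.div_le_div_right (Nat.mul_le_mul_right 1 (Nat.sub_le _ _))).trans (by simp)
  omega

theorem choose_two_le_count_swap_add_sq_div_four (w : List Letter) (c : Fin (m + 2))
    (hw : wordPerm m w = Equiv.subLeft c) :
    (m + 2).choose 2 ≤ w.count .swap + (m + 2) ^ 2 / 4 := by
  have hcover (x y z : Fin (m + 2)) (hxy : x ≠ y) (hyz : y ≠ z) (hzx : z ≠ x) :
      s(x, y) ∈ swappedPairs m w ∨ s(y, z) ∈ swappedPairs m w ∨ s(z, x) ∈ swappedPairs m w := by
    by_contra! h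
    have hsbtw := sbtw_wordPerm_iff w h.1 h.2.1 h.2.2
    simp only [hw, Equiv.subLeft_apply, sbtw_sub_left_iff] at hsbtw
    exact iff_not_self (hsbtw.trans (sbtw_iff_not_sbtw_of_ne hxy hyz hzx))
  have hbound := choose_two_le_card_add_sq_div_four _ hcover
  rw [Fintype.card_fin] at hbound
  have := card_swappedPairs_le (m := m) w
  omega

end Swaps

section Moves

open Finset

variable {m : ℕ}

/-- The point of the cycle of length `m + 1` at which a position is placed once the two positions
`0, 1` of the window are identified. -/
def site (p : Fin (m + 2)) : ZMod (m + 1) := if p = 0 then 1 else (p : ℕ)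

theorem site_zero : site (0 : Fin (m + 2)) = 1 := if_pos rfl

theorem site_of_ne_zero {p : Fin (m + 2)} (hp : p ≠ 0) : site p = (p : ℕ) := if_neg hp

theorem site_add_one (p : Fin (m + 2)) : site (p + 1) = site p + if p = 0 then 0 else 1 := by
  by_cases hp : p = 0
  · rw [hp, zero_add, site_zero, site_of_ne_zero one_ne_zero, if_pos rfl, add_zero, Fin.val_one,
      Nat.cast_one]
  rw [site_of_ne_zero hp, if_neg hp, ← Nat.cast_add_one]
  rcases eq_or_ne p (Fin.last (m + 1)) with rfl | hlast
  · rw [Fin.last_add_one, site_zero, Fin.val_last, Nat.cast_add_one (m + 1), ZMod.natCast_self,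
      zero_add]
  · have hval := Fin.val_add_one_of_lt (Fin.lt_last_iff_ne_last.2 hlast)
    rw [site_of_ne_zero (Fin.ne_of_val_ne (by rw [hval]; exact Nat.succ_ne_zero _)), hval]

theorem site_swap (p : Fin (m + 2)) : site (Equiv.swap 0 1 p) = site p := by
  by_cases h₀ : p = 0
  · simp [h₀, site]
  by_cases h₁ : p = 1
  · simp [h₁, site]
  rw [Equiv.swap_apply_of_ne_of_ne h₀ h₁]

theorem site_add_site_sub {c : Fin (m + 2)} (hc : c ≠ 0) (z : Fin (m + 2)) :
    site z + site (c - z) = (c : ℕ) + if z = 0 ∨ c ≤ z then 1 else 0 := by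
  rcases eq_or_ne z 0 with rfl | hz
  · rw [sub_zero, site_zero, site_of_ne_zero hc, if_pos (.inl rfl)]
    exact add_comm _ _
  rcases eq_or_ne z c with rfl | hzc
  · rw [sub_self, site_zero, site_of_ne_zero hc, if_pos (.inr le_rfl)]
  rw [site_of_ne_zero hz, site_of_ne_zero (sub_ne_zero.2 hzc.symm), ← Nat.cast_add]
  rcases lt_or_ge z c with hlt | hge
  · rw [if_neg (not_or.2 ⟨hz, hlt.not_ge⟩), add_zero, Fin.sub_val_of_le hlt.le,
      Nat.add_sub_cancel' hlt.le]
  · have hval : z.val + (c - z).val = c + 1 + (m + 1) := by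
      rw [Fin.coe_sub_iff_lt.2 (lt_of_le_of_ne hge hzc.symm)]
      omega
    rw [if_pos (.inr hge), hval, Nat.cast_add, ZMod.natCast_self, add_zero, Nat.cast_add_one]

theorem card_filter_eq_zero_or_le {c : Fin (m + 2)} (hc : c ≠ 0) :
    #{z | z = 0 ∨ c ≤ z} = m + 3 - c := by
  have hfilter : ({z | z = 0 ∨ c ≤ z} : Finset (Fin (m + 2))) = insert 0 (Ici c) := by
    ext z
    simp
  rw [hfilter, card_insert_of_notMem (by simpa using hc), Fin.card_Ici]
  omega

theorem sum_site_add_site_sub_one {β : Type*} [AddCommMonoid β] (F : ZMod (m + 1) → β) :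
    ∑ p : Fin (m + 2), F (site p + site (p - 1)) = ∑ x, F (2 * x + 1) + F 2 := by
  rw [Fin.sum_univ_succAbove _ 1, sub_self, site_zero, site_of_ne_zero one_ne_zero, Fin.val_one,
    Nat.cast_one, one_add_one_eq_two, add_comm, sum_zmod_eq_sum_range,
    ← Fin.sum_univ_eq_sum_range fun j => F (2 * j + 1)]
  congr 1
  refine sum_congr rfl fun i _ => congrArg F ?_
  cases i using Fin.cases with
  | zero =>
    have hlast : ((-1 : Fin (m + 2)) : ℕ) = m + 1 := Fin.coe_neg_one
    have hne : (-1 : Fin (m + 2)) ≠ 0 := by simp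
    rw [Fin.succAbove_ne_zero_zero one_ne_zero, zero_sub, site_zero, site_of_ne_zero hne, hlast,
      ZMod.natCast_self, Fin.val_zero, Nat.cast_zero]
    ring
  | succ i =>
    have habove : (1 : Fin (m + 2)).succAbove i.succ = i.succ.succ := by
      rw [← Fin.succ_zero_eq_one, Fin.succ_succAbove_succ, Fin.succAbove_zero]
    have hsub : i.succ.succ - 1 = i.succ.castSucc := by
      rw [← Fin.coeSucc_eq_succ, add_sub_cancel_right]
    rw [habove, hsub, site_of_ne_zero (Fin.succ_ne_zero _),
      site_of_ne_zero (Fin.castSucc_ne_zero_iff.2 (Fin.succ_ne_zero i)), Fin.val_castSucc,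
      Fin.val_succ i.succ, Nat.cast_add_one]
    ring

theorem Letter.sum_circNorm_shift_add_le (a : Letter) :
    ∑ p, circNorm ((a.shift : ZMod (m + 1)) + site (a.perm m p) - site p) ≤
      if a = .swap then 0 else 1 := by
  have hsingle (q : Fin (m + 2)) (x : ZMod (m + 1)) (hx : circNorm x ≤ 1) :
      ∑ p, circNorm (if p = q then x else 0) ≤ 1 := by
    simpa [apply_ite circNorm, circNorm_zero] using hx
  cases a with
  | swap => simp [shift, perm, site_swap, circNorm_zero]
  | rot =>
    refine (sum_congr rfl fun p _ => congrArg circNorm ?_).trans_le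
      (hsingle 0 (-1) ((circNorm_neg 1).trans_le circNorm_one_le))
    rw [perm_rot_apply, site_add_one]
    split_ifs <;> simp [shift]
  | rotInv =>
    refine (sum_congr rfl fun p _ => congrArg circNorm ?_).trans_le (hsingle 1 1 circNorm_one_le)
    nth_rw 2 [← sub_add_cancel p 1]
    rw [perm_rotInv_apply, site_add_one]
    simp only [sub_eq_zero]
    split_ifs <;> push_cast [shift] <;> ring

theorem sum_circNorm_headPos_add_le (w : List Letter) :
    ∑ z, circNorm ((headPos w : ZMod (m + 1)) + site (wordPerm m w z) - site z) ≤ moves w := by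
  induction w with
  | nil => simp [headPos, wordPerm, moves, circNorm_zero]
  | cons a w ih =>
    have hletter := (Equiv.sum_comp (wordPerm m w) _).trans_le a.sum_circNorm_shift_add_le
    rw [moves_cons]
    refine le_trans ?_ (add_le_add ih hletter)
    rw [← sum_add_distrib]
    refine sum_le_sum fun z _ => le_trans (le_of_eq (congrArg circNorm ?_)) (circNorm_add_le _ _)
    rw [headPos_cons, wordPerm_cons_apply]
    push_cast
    ring

theorem exists_append_cons_of_headPos (w : List Letter) {u v : List Letter} {τ : ℤ} (hu : u <:+ w)
    (hv : v <:+ w) (huτ : headPos u ≤ τ) (hvτ : τ + 1 ≤ headPos v) :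
    ∃ w₁ a w₂, w = w₁ ++ a :: w₂ ∧
      (a = .rotInv ∧ headPos w₂ = τ ∨ a = .rot ∧ headPos w₂ = τ + 1) := by
  by_contra! hno
  have hsame (x : List Letter) (hx : x <:+ w) : headPos x ≤ τ ↔ headPos [] ≤ τ := by
    induction x with
    | nil => rfl
    | cons a x ih =>
      obtain ⟨w₁, rfl⟩ := hx
      rw [← ih ((List.suffix_cons a x).trans (List.suffix_append w₁ _)), headPos_cons]
      have hcross := hno w₁ a x rfl
      cases a <;> simp only [Letter.shift, reduceCtorEq, true_implies] at * <;> omega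
  have := (hsame u hu).1 huτ
  have := (hsame v hv).2 this
  omega

-- Displacements before and after a cut are added because a reflection makes the sum
-- `site z + site (c - z)` almost independent of `z`.
theorem sum_circNorm_append_cons_le (u v : List Letter) (a : Letter) :
    ∑ z, circNorm ((headPos v - headPos u : ZMod (m + 1)) +
      (site (wordPerm m v z) + site (a.perm m (wordPerm m v z))) -
        (site z + site (wordPerm m (u ++ a :: v) z))) ≤ moves v + moves u := by
  have hv := sum_circNorm_headPos_add_le (m := m) v
  have hu := (Equiv.sum_comp (wordPerm m (a :: v)) _).trans_le
    (sum_circNorm_headPos_add_le (m := m) u)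
  refine le_trans ?_ (add_le_add hv hu)
  rw [← sum_add_distrib]
  refine sum_le_sum fun z _ => le_of_eq_of_le (congrArg circNorm ?_) (circNorm_sub_le _ _)
  rw [wordPerm_append_apply, wordPerm_cons_apply]
  ring

theorem exists_perm_sum_circNorm_le (w : List Letter) {u v : List Letter} {τ : ℤ} (hu : u <:+ w)
    (hv : v <:+ w) (huτ : headPos u ≤ τ) (hvτ : τ + 1 ≤ headPos v) :
    ∃ q : Equiv.Perm (Fin (m + 2)),
      ∑ z, circNorm ((2 * τ + 1 - headPos w : ZMod (m + 1)) + (site (q z) + site (q z - 1)) -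
        (site z + site (wordPerm m w z))) + 1 ≤ moves w := by
  obtain ⟨w₁, a, w₂, rfl, ⟨rfl, rfl⟩ | ⟨rfl, hτ⟩⟩ :=
    exists_append_cons_of_headPos w hu hv huτ hvτ
  all_goals
    have hcut := sum_circNorm_append_cons_le (m := m) w₁ w₂
    rw [moves_append, moves_cons, if_neg (by decide), ← add_assoc, add_comm (moves w₁)]
  · refine ⟨wordPerm m w₂, add_le_add_left (le_of_eq_of_le ?_ (hcut .rotInv)) 1⟩
    refine sum_congr rfl fun z _ => congrArg circNorm ?_
    rw [Letter.perm_rotInv_apply, headPos_append, headPos_cons]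
    push_cast [Letter.shift]
    ring
  · refine ⟨wordPerm m (.rot :: w₂), add_le_add_left (le_of_eq_of_le ?_ (hcut .rot)) 1⟩
    refine sum_congr rfl fun z _ => congrArg circNorm ?_
    rw [wordPerm_cons_apply, Letter.perm_rot_apply, add_sub_cancel_right, headPos_append,
      headPos_cons, hτ]
    push_cast [Letter.shift]
    ring

open scoped Fin.CommRing

theorem wordPerm_apply_of_forall_suffix (w : List Letter) (x : Fin (m + 2))
    (hx : ∀ u, u <:+ w → x - headPos u ≠ 0 ∧ x - headPos u ≠ 1) :
    wordPerm m w x = x - headPos w := by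
  induction w with
  | nil => simp [wordPerm, headPos]
  | cons a w ih =>
    have hw := ih fun u hu => hx u (hu.trans (List.suffix_cons a w))
    obtain ⟨h₀, h₁⟩ := hx w (List.suffix_cons a w)
    rw [wordPerm_cons_apply, hw, headPos_cons]
    cases a with
    | rot =>
      rw [Letter.perm_rot_apply]
      push_cast [Letter.shift]
      ring
    | rotInv =>
      rw [Letter.perm_rotInv_apply]
      push_cast [Letter.shift]
      ring
    | swap =>
      rw [Letter.shift, zero_add]
      exact Equiv.swap_apply_of_ne_of_ne h₀ h₁

theorem intCast_fin_ne_zero {j : ℤ} (h₀ : 0 < j) (h₁ : j < m + 2) : (j : Fin (m + 2)) ≠ 0 := by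
  rw [Ne, CharP.intCast_eq_zero_iff (Fin (m + 2)) (m + 2)]
  exact fun hdvd => (Int.le_of_dvd h₀ hdvd).not_gt (by exact_mod_cast h₁)

theorem exists_suffix_headPos_add_le (hm : 3 ≤ m) (w : List Letter) (c : Fin (m + 2))
    (hw : wordPerm m w = Equiv.subLeft c) :
    ∃ u v, u <:+ w ∧ v <:+ w ∧ headPos u + (m + 2) / 2 ≤ headPos v := by
  by_contra! hspread
  have hnil : w.tails.toFinset.Nonempty := ⟨[], by simp⟩
  obtain ⟨v, hv, hmax⟩ := exists_max_image w.tails.toFinset headPos hnil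
  simp only [List.mem_toFinset, List.mem_tails] at hv hmax
  -- Two adjacent tokens just ahead of the window never meet it, so they keep their order.
  have hfixed (j : ℤ) (hj₂ : 2 ≤ j) (hj₃ : j ≤ 3) :
      wordPerm m w (headPos v + j : ℤ) = ((headPos v + j : ℤ) : Fin (m + 2)) - headPos w := by
    refine wordPerm_apply_of_forall_suffix w _ fun u hu => ?_
    have hu₁ := hmax u hu
    have hu₂ := hspread u v hu hv
    rw [← sub_ne_zero (b := 1)]
    have h₀ : ((headPos v + j - headPos u : ℤ) : Fin (m + 2)) ≠ 0 :=
      intCast_fin_ne_zero (by omega) (by omega)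
    have h₁ : ((headPos v + j - headPos u - 1 : ℤ) : Fin (m + 2)) ≠ 0 :=
      intCast_fin_ne_zero (by omega) (by omega)
    exact ⟨mod_cast h₀, mod_cast h₁⟩
  have h₂ := hfixed 2 le_rfl (by norm_num)
  have h₃ := hfixed 3 (by norm_num) le_rfl
  rw [hw, Equiv.subLeft_apply] at h₂ h₃
  have htwo : ((2 : ℤ) : Fin (m + 2)) = 0 := by
    push_cast at h₂ h₃ ⊢
    linear_combination h₂ - h₃
  exact intCast_fin_ne_zero two_pos (by omega) htwo

theorem doubleSum_add_circNorm_le {c : Fin (m + 2)} (hc : c ≠ 0) (q : Equiv.Perm (Fin (m + 2)))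
    (C : ZMod (m + 1)) :
    doubleSum C + circNorm (C + 1) ≤
      ∑ z, circNorm ((C + (c : ℕ) - 1 : ZMod (m + 1)) + (site (q z) + site (q z - 1)) -
        (site z + site (c - z))) + (m + 3 - c) := by
  calc doubleSum C + circNorm (C + 1)
      = ∑ p, circNorm (C - 1 + (site p + site (p - 1))) := by
        rw [sum_site_add_site_sub_one fun x => circNorm (C - 1 + x), doubleSum]
        ring_nf
    _ = ∑ z, circNorm (C - 1 + (site (q z) + site (q z - 1))) := (Equiv.sum_comp q _).symm
    _ ≤ ∑ z, (circNorm ((C + (c : ℕ) - 1 : ZMod (m + 1)) + (site (q z) + site (q z - 1)) -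
          (site z + site (c - z))) + if z = 0 ∨ c ≤ z then 1 else 0) := by
        refine sum_le_sum fun z _ => ?_
        rw [site_add_site_sub hc]
        split_ifs
        · refine le_of_eq_of_le (congrArg circNorm ?_)
            ((circNorm_add_le _ 1).trans (Nat.add_le_add_left circNorm_one_le _))
          ring
        · exact le_of_eq (congrArg circNorm (by ring))
    _ = _ := by rw [sum_add_distrib, ← card_filter, card_filter_eq_zero_or_le hc]

theorem sq_div_four_le_moves_add (hm : 3 ≤ m) (w : List Letter) {c : Fin (m + 2)} (hc : c ≠ 0)
    (hw : wordPerm m w = Equiv.subLeft c) :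
    (m + 2) ^ 2 / 4 ≤ moves w + (m + 3 - c) := by
  obtain ⟨u, v, hu, hv, huv⟩ := exists_suffix_headPos_add_le hm w c hw
  obtain ⟨C, hC⟩ : ∃ C : ZMod (m + 1), C = 2 * headPos u + 2 - headPos w - (c : ℕ) := ⟨_, rfl⟩
  obtain ⟨k, hk, hfar⟩ := exists_le_circNorm_add_two_mul (C + 1)
  obtain ⟨q, hq⟩ := exists_perm_sum_circNorm_le (m := m) w (τ := headPos u + k) hu hv (by omega)
    (by omega)
  have hcut : (2 * (headPos u + k : ℤ) + 1 - headPos w : ZMod (m + 1)) =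
      C + 2 * k + (c : ℕ) - 1 := by
    rw [hC]
    push_cast
    ring
  simp only [hw, Equiv.subLeft_apply, hcut] at hq
  have hsum := doubleSum_add_circNorm_le hc q (C + 2 * k)
  have hbound := sq_div_four_le_doubleSum_add (add_right_comm C 1 (2 * k) ▸ hfar)
  exact hbound.trans (by omega)

theorem two_le_moves_of_eq_subLeft_three (w : List Letter) (hw : wordPerm 2 w = Equiv.subLeft 3) :
    2 ≤ moves w := by
  have hsites : ∀ h : ZMod (2 + 1),
      2 ≤ ∑ z : Fin (2 + 2), circNorm (h + site (3 - z) - site z) := by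
    decide
  have hmoves := sum_circNorm_headPos_add_le (m := 2) w
  rw [hw] at hmoves
  exact (hsites _).trans hmoves

theorem choose_two_le_length_add (w : List Letter) (c : Fin (m + 2))
    (hc : (m + 3) / 2 < c) (hw : wordPerm m w = Equiv.subLeft c) :
    (m + 2).choose 2 ≤ w.length + (m + 3 - c) := by
  have hswaps := choose_two_le_count_swap_add_sq_div_four w c hw
  have hmoves : (m + 2) ^ 2 / 4 ≤ moves w + (m + 3 - c) := by
    have hm : 2 ≤ m := by omega
    rcases hm.eq_or_lt with rfl | hm
    · obtain rfl : c = 3 := Fin.ext (show (c : ℕ) = 3 by omega)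
      exact Nat.add_le_add_right (two_le_moves_of_eq_subLeft_three w hw) 2
    · exact sq_div_four_le_moves_add hm w (by rintro rfl; simp at hc) hw
  rw [← count_swap_add_moves]
  omega

end Moves

section Routes

variable {m : ℕ}

open scoped Fin.CommRing

namespace Letter

/-- The letter naming the inverse generator. -/
def inv : Letter → Letter
  | rot => rotInv
  | rotInv => rot
  | swap => swap

theorem perm_inv (a : Letter) : a.inv.perm m = (a.perm m)⁻¹ := by
  cases a with
  | rot => rfl
  | rotInv => exact (inv_inv _).symm
  | swap => exact (Equiv.swap_inv 0 1).symm

end Letter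

theorem wordPerm_map_inv_reverse (w : List Letter) :
    wordPerm m (w.map Letter.inv).reverse = (wordPerm m w)⁻¹ := by
  rw [wordPerm, wordPerm, List.prod_inv_reverse, List.map_reverse, List.map_map, List.map_map]
  exact congrArg (fun l : List _ => l.reverse.prod)
    (List.map_congr_left fun a _ => Letter.perm_inv a)

theorem wordPerm_replicate_rot (d : ℕ) (z : Fin (m + 2)) :
    wordPerm m (List.replicate d .rot) z = z + d := by
  induction d with
  | zero => simp [wordPerm]
  | succ d ih =>
    rw [List.replicate_succ, wordPerm_cons_apply, Letter.perm_rot_apply, ih, Nat.cast_succ,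
      add_assoc]

/-- `Route m s t F k`: with locations on the circle of `m + 2` points measured so that the window
stands at `t` before and at `s` after, some word of length `k` moves the content of each location
`x` to `F x`. Read from left to right, the letters carry the window from `s` to `t`, so routes
compose like words; `F` lives on `ℕ` so that compositions are linear arithmetic. -/
def Route (m s t : ℕ) (F : ℕ → ℕ) (k : ℕ) : Prop :=
  ∃ (σ : Equiv.Perm (Fin (m + 2))) (w : List Letter), (∀ x, (σ x : ℕ) = F x) ∧
    (∀ z, wordPerm m w z + s = σ (z + t)) ∧ w.length = k

namespace Route

variable {s t u k k' : ℕ} {F G : ℕ → ℕ}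

theorem trans (h : Route m s t F k) (h' : Route m t u G k') :
    Route m s u (fun x => F (G x)) (k + k') := by
  obtain ⟨σ, w, hσ, hw, rfl⟩ := h
  obtain ⟨τ, v, hτ, hv, rfl⟩ := h'
  exact ⟨σ * τ, w ++ v, fun x => by rw [Equiv.Perm.mul_apply, hσ, hτ],
    fun z => by rw [wordPerm_append_apply, hw, hv, Equiv.Perm.mul_apply], List.length_append⟩

theorem symm (h : Route m s t F k) (hGF : ∀ x < m + 2, G (F x) = x) : Route m t s G k := by
  obtain ⟨σ, w, hσ, hw, rfl⟩ := h
  refine ⟨σ⁻¹, (w.map Letter.inv).reverse, fun x => ?_, fun z => ?_, by simp⟩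
  · rw [← hGF _ (σ⁻¹ x).is_lt, ← hσ, Equiv.Perm.inv_def, Equiv.apply_symm_apply]
  · rw [wordPerm_map_inv_reverse, Equiv.Perm.eq_inv_iff_eq, ← hw, Equiv.Perm.inv_def,
      Equiv.apply_symm_apply]

theorem congr (h : Route m s t F k) {s' t' : ℕ} (hs : s = s') (ht : t = t')
    (hF : ∀ x < m + 2, F x = G x) (hk : k = k') : Route m s' t' G k' := by
  subst hs ht hk
  obtain ⟨σ, w, hσ, hw⟩ := h
  exact ⟨σ, w, fun x => (hσ x).trans (hF x x.is_lt), hw⟩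

theorem right (s d : ℕ) : Route m s (s + d) (fun x => x) d :=
  ⟨1, List.replicate d .rot, fun _ => rfl,
    fun z => by rw [wordPerm_replicate_rot, Nat.cast_add, add_right_comm, add_assoc]; rfl,
    List.length_replicate⟩

theorem left (s d : ℕ) : Route m (s + d) s (fun x => x) d :=
  (right s d).symm fun _ _ => rfl

theorem swap (hs : s + 1 < m + 2) :
    Route m s s (fun x => if x = s then s + 1 else if x = s + 1 then s else x) 1 := by
  have h₀ : ((s : Fin (m + 2)) : ℕ) = s := Fin.val_cast_of_lt (by omega)
  have h₁ : (((s + 1 : ℕ) : Fin (m + 2)) : ℕ) = s + 1 := Fin.val_cast_of_lt hs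
  refine ⟨Equiv.swap s (s + 1 : ℕ), [.swap], fun x => ?_, fun z => ?_, rfl⟩
  · rw [Equiv.swap_apply_def]
    simp only [Fin.ext_iff, h₀, h₁]
    split_ifs <;> first | assumption | rfl
  · simpa [wordPerm, Letter.perm, add_comm] using
      (Equiv.addRight (s : Fin (m + 2))).injective.map_swap 0 1 z

theorem passRight (l d : ℕ) (h : l + d + 1 < m + 2) :
    Route m l (l + d)
      (fun x => if x = l + d + 1 then l else if l ≤ x ∧ x ≤ l + d then x + 1 else x)
      (2 * d + 1) := by
  induction d with
  | zero => exact (swap h).congr rfl rfl (by grind) rfl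
  | succ d ih =>
    exact (((ih (by omega)).trans (right (l + d) 1)).trans (swap h)).congr rfl rfl (by grind)
      (by omega)

theorem passLeft (l d : ℕ) (h : l + d + 1 < m + 2) :
    Route m (l + d) l
      (fun x => if x = l then l + d + 1 else if l < x ∧ x ≤ l + d + 1 then x - 1 else x)
      (2 * d + 1) :=
  (passRight l d h).symm (by grind)

end Route

/-- The reversal of the block `[l, l + b)` of natural numbers. -/
def blockRev (l b x : ℕ) : ℕ := if l ≤ x ∧ x < l + b then 2 * l + b - 1 - x else x

theorem blockRev_blockRev (l b x : ℕ) : blockRev l b (blockRev l b x) = x := by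
  grind [blockRev]

-- Carrying an extreme token across the block leaves the window at the end from which the rest of
-- the block is to be reversed, so the two statements are proved from each other.
theorem Route.zigzag (b l : ℕ) (hl : l + (b + 2) ≤ m + 2) :
    Route m l (l + (b + 2) / 2 - 1) (blockRev l (b + 2)) ((b + 2) * (b + 1) - 1) ∧
      Route m (l + b) (l + (b + 3) / 2 - 1) (blockRev l (b + 2)) ((b + 2) * (b + 1) - 1) := by
  induction b generalizing l with
  | zero =>
    have hswap : Route m l l (blockRev l 2) 1 :=
      (swap (by omega)).congr rfl rfl (by grind [blockRev]) rfl
    exact ⟨hswap, hswap⟩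
  | succ b ih =>
    have hlen : 2 * (b + 1) + 1 + 1 + ((b + 2) * (b + 1) - 1) =
        (b + 1 + 2) * (b + 1 + 1) - 1 := by
      have : (b + 1 + 2) * (b + 1 + 1) = (b + 2) * (b + 1) + 2 * (b + 2) := by ring
      have : 0 < (b + 2) * (b + 1) := by positivity
      omega
    constructor
    · exact (((passRight l (b + 1) (by omega)).trans (left (l + b) 1)).trans
        (ih l (by omega)).2).congr rfl (by omega) (by grind [blockRev]) hlen
    · exact (((passLeft l (b + 1) (by omega)).trans (right l 1)).trans
        (ih (l + 1) (by omega)).1).congr rfl (by omega) (by grind [blockRev]) hlen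

theorem Letter.range_perm (h : 2 ≤ m + 2) : Set.range (Letter.perm m) = gens (m + 2) h := by
  ext g
  constructor
  · rintro ⟨a | a | a, rfl⟩
    exacts [.inr (.inl rfl), .inr (.inr rfl), .inl rfl]
  · rintro (rfl | rfl | rfl)
    exacts [⟨.swap, rfl⟩, ⟨.rot, rfl⟩, ⟨.rotInv, rfl⟩]

theorem isMinWordLen_iff (h : 2 ≤ m + 2) (g : Equiv.Perm (Fin (m + 2))) (d : ℕ) :
    IsMinWordLen (m + 2) h g d ↔
      (∃ w, wordPerm m w = g ∧ w.length = d) ∧ ∀ w, wordPerm m w = g → d ≤ w.length := by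
  have hwords (l : List (Equiv.Perm (Fin (m + 2)))) :
      (∀ x ∈ l, x ∈ gens (m + 2) h) ↔ ∃ w : List Letter, w.map (Letter.perm m) = l := by
    rw [← Letter.range_perm, ← Set.mem_range, Set.range_list_map, Set.mem_ofPred_eq]
  simp [IsMinWordLen, hwords, wordPerm]

theorem blockRev_blockRev_of_lt {b b' x : ℕ} (hx : x < b + b') :
    blockRev 0 b (blockRev b b' x) = if x < b then b - 1 - x else 2 * b + b' - 1 - x := by
  grind [blockRev]

theorem exists_wordPerm_eq_subLeft_of_blocks (b b' j : ℕ) (hb : b + 2 + (b' + 2) = m + 2) :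
    ∃ w, wordPerm m w =
        Equiv.subLeft ((j + 1 : ℕ) - ((b + 3) / 2 + (b' + 2) / 2 : ℕ) : Fin (m + 2)) ∧
      w.length = (b + 2) * (b + 1) - 1 + ((b' + 2) * (b' + 1) - 1) + (j + 2) := by
  have hfirst := (Route.zigzag (m := m) b 0 (by omega)).2.symm fun x _ => blockRev_blockRev _ _ x
  have hsecond := (Route.zigzag (m := m) b' (b + 2) (by omega)).1
  obtain ⟨σ, w, hσ, hw, hlen⟩ :=
    ((hfirst.trans (Route.right (0 + b) 2)).congr rfl (Nat.zero_add _ ▸ rfl)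
      (fun _ _ => rfl) rfl).trans hsecond
  have hrev (x : Fin (m + 2)) : σ x = (b + 1 : ℕ) - x := by
    refine eq_sub_of_add_eq ?_
    have hval : (σ x : ℕ) + x = b + 1 ∨ (σ x : ℕ) + x = b + 1 + (m + 2) := by
      have hlt : (x : ℕ) < b + 2 + (b' + 2) := x.is_lt.trans_eq hb.symm
      rw [show (σ x : ℕ) = _ from (hσ x).trans (blockRev_blockRev_of_lt hlt)]
      split_ifs <;> omega
    have hcast : (((σ x : ℕ) + x : ℕ) : Fin (m + 2)) = (b + 1 : ℕ) := by
      rcases hval with h | h <;> rw [h]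
      rw [Nat.cast_add _ (m + 2), CharP.cast_eq_zero (Fin (m + 2)) (m + 2), add_zero]
    rwa [Nat.cast_add, Fin.cast_val_eq_self, Fin.cast_val_eq_self] at hcast
  obtain ⟨s, hs⟩ : ∃ s, (b + 3) / 2 = s + 1 := ⟨(b + 1) / 2, by omega⟩
  obtain ⟨t, ht⟩ : ∃ t, (b' + 2) / 2 = t + 1 := ⟨b' / 2, by omega⟩
  refine ⟨List.replicate j .rot ++ w, Equiv.ext fun z => ?_, ?_⟩
  · rw [wordPerm_append_apply, wordPerm_replicate_rot, Equiv.subLeft_apply, eq_sub_of_add_eq (hw z),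
      hrev, hs, ht]
    simp only [zero_add, ← add_assoc, Nat.add_sub_cancel]
    push_cast
    ring
  · rw [List.length_append, List.length_replicate, hlen]
    omega

theorem inv_revPerm_mul_finRotate_pow {k : ℕ} {c : Fin (m + 2)} (hc : (c : ℕ) + 1 + k = m + 2) :
    ((Fin.revPerm : Equiv.Perm (Fin (m + 2))) * finRotate (m + 2) ^ k)⁻¹ = Equiv.subLeft c := by
  have hpow (z : Fin (m + 2)) : (finRotate (m + 2) ^ k) z = z + k := by
    have := wordPerm_replicate_rot k z
    rwa [wordPerm, List.map_replicate, List.prod_replicate] at this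
  have hrev (z : Fin (m + 2)) : Fin.rev z = -1 - z := by
    rw [← Fin.last_sub, show Fin.last (m + 1) = -1 from Fin.ext Fin.coe_neg_one.symm]
  have hcast : c + 1 + (k : Fin (m + 2)) = 0 := by
    have := congrArg (Nat.cast : ℕ → Fin (m + 2)) hc
    rwa [CharP.cast_eq_zero (Fin (m + 2)) (m + 2), Nat.cast_add, Nat.cast_add_one,
      Fin.cast_val_eq_self] at this
  rw [inv_eq_iff_mul_eq_one]
  ext1 z
  simp only [Equiv.Perm.mul_apply, Equiv.subLeft_apply, Fin.revPerm_apply, hpow, hrev,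
    Equiv.Perm.one_apply]
  linear_combination -hcast

theorem exists_wordPerm_eq_subLeft_length_eq (c : Fin (m + 2)) (hc : (m + 3) / 2 < c) :
    ∃ w, wordPerm m w = Equiv.subLeft c ∧ w.length = (m + 3) / 2 * ((m + 3) / 2 - 1) - 1 +
      ((m + 2) / 2 * ((m + 2) / 2 - 1) - 1) + (c + 1 - (m + 3) / 2) := by
  obtain ⟨b, b', hceil, hfloor⟩ : ∃ b b', (m + 3) / 2 = b + 2 ∧ (m + 2) / 2 = b' + 2 :=
    ⟨(m - 1) / 2, (m - 2) / 2, by omega, by omega⟩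
  obtain ⟨j, hj⟩ : ∃ j, (c : ℕ) = b + 3 + j := Nat.exists_eq_add_of_le (by omega)
  have hcast {p : ℕ} (hp : p = b' + 2) : ((j + 1 : ℕ) - (p : ℕ) : Fin (m + 2)) = c := by
    rw [sub_eq_iff_eq_add, ← Fin.cast_val_eq_self c, ← Nat.cast_add,
      show (c : ℕ) + p = j + 1 + (m + 2) by omega, Nat.cast_add _ (m + 2),
      CharP.cast_eq_zero (Fin (m + 2)) (m + 2), add_zero]
  rw [hceil, hfloor, hj, show b + 3 + j + 1 - (b + 2) = j + 2 by omega]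
  rcases eq_or_ne ((m + 2) % 4) 3 with h | h
  · have hmid : (b + 3) / 2 + (b' + 2) / 2 = b' + 2 := by omega
    exact hcast hmid ▸ exists_wordPerm_eq_subLeft_of_blocks (m := m) b b' j (by omega)
  · have hmid : (b' + 3) / 2 + (b + 2) / 2 = b' + 2 := by omega
    rw [add_comm (_ - 1)]
    exact hcast hmid ▸ exists_wordPerm_eq_subLeft_of_blocks (m := m) b' b j (by omega)

theorem choose_two_eq_half_mul (n : ℕ) :
    n.choose 2 = (n + 1) / 2 * ((n + 1) / 2 - 1) + n / 2 * (n / 2 - 1) + n / 2 := by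
  rw [Nat.choose_two_right]
  obtain ⟨f, rfl | rfl⟩ := Nat.even_or_odd' n
  · rw [show (2 * f + 1) / 2 = f by omega, Nat.mul_div_cancel_left f two_pos, mul_assoc,
      Nat.mul_div_cancel_left _ two_pos]
    cases f with
    | zero => rfl
    | succ f =>
      rw [Nat.add_sub_cancel, show 2 * (f + 1) - 1 = 2 * f + 1 by omega]
      ring
  · rw [show (2 * f + 1 + 1) / 2 = f + 1 by omega, show (2 * f + 1) / 2 = f by omega,
      Nat.add_sub_cancel, Nat.add_sub_cancel, mul_left_comm, Nat.mul_div_cancel_left _ two_pos,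
      add_assoc, ← Nat.mul_add_one]
    cases f with
    | zero => rfl
    | succ f =>
      rw [Nat.add_sub_cancel]
      ring

end Routes

/-- For `n ≥ 4` and `⌈n/2⌉ + 2 ≤ i ≤ n`, with `s = [n n-1 … 1]` and
`r = (1 2 … n)`, `dist(s r^(n-i), 1) = ⌈n/2⌉(⌈n/2⌉-1) - 1 + ⌊n/2⌋(⌊n/2⌋-1) - 1 +
i - ⌈n/2⌉` in the word metric with respect to `{(1 2), r, r⁻¹}`. -/
theorem stmt13 (n : ℕ) (hn : 4 ≤ n) (i : ℕ) (hi1 : (n + 1) / 2 + 2 ≤ i) (hi2 : i ≤ n) :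
    IsMinWordLen n (by omega)
      (((Fin.revPerm : Equiv.Perm (Fin n)) * (finRotate n) ^ (n - i))⁻¹)
      (((n + 1) / 2 * ((n + 1) / 2 - 1) - 1) + (n / 2 * (n / 2 - 1) - 1) + (i - (n + 1) / 2)) := by
  obtain ⟨m, rfl⟩ := Nat.exists_eq_add_of_le' (show 2 ≤ n by omega)
  obtain ⟨c, rfl⟩ : ∃ c : Fin (m + 2), i = c + 1 := ⟨⟨i - 1, by omega⟩, by dsimp only; omega⟩
  have hc : (m + 3) / 2 < c := by omega
  rw [isMinWordLen_iff, inv_revPerm_mul_finRotate_pow (Nat.add_sub_of_le hi2)]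
  refine ⟨exists_wordPerm_eq_subLeft_length_eq c hc, fun w hw => ?_⟩
  have hlower := choose_two_le_length_add w c hc hw
  rw [choose_two_eq_half_mul] at hlower
  have hceil : 0 < (m + 2 + 1) / 2 * ((m + 2 + 1) / 2 - 1) := Nat.mul_pos (by omega) (by omega)
  have hfloor : 0 < (m + 2) / 2 * ((m + 2) / 2 - 1) := Nat.mul_pos (by omega) (by omega)
  omega
end

section
/- Let n ≥ 3, 2 ≤ j ≤ ⌈n/2⌉, δ = (1 2), r = (1 2 … n) in S_n, and dist the word metric with respect to {δ, r, r^{-1}}. Let π ∈ S_n be arbitrary and let ξ ∈ S_n be the permutation whose one-line notation reverses the first j entries of π and agrees with π elsewhere. Then dist(π, ξ r^{⌊j/2⌋ - 1}) = j(j-1) - 1. -/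
/-!
Modulo rotations, `δ` acts as a cyclically adjacent transposition, and the number of these needed
to sort `g` is bounded below by the least number of inversions of an affine permutation over `g`.
This quantity is invariant under `r` and grows by at most one under `δ`; since two adjacent `δ`
cancel, a reduced word of length `d` contains at most `(d + 1) / 2` letters `δ`. For the reversal of
the first `j` positions, a lift with quotients `a` has `∑_{i < k} |a k - a i - [k < j]|` inversions.
The inversions a non-constant `a` saves inside the block are paid back by the pairs joining the
block to its complement, which is large enough because `j ≤ ⌈n / 2⌉`; hence there are at least
`j (j - 1) / 2` of them. Conversely, reversing `j + 2` positions is reversing the middle `j` and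
exchanging the two ends, which yields a word of the required length by induction.
-/

open Finset Equiv
open scoped Pointwise

theorem exists_list_prod_iff_mem_pow {M : Type*} [Monoid M] {S : Set M} {g : M} {d : ℕ} :
    (∃ l : List M, (∀ x ∈ l, x ∈ S) ∧ l.prod = g ∧ l.length = d) ↔ g ∈ S ^ d := by
  rw [Set.mem_pow]
  constructor
  · rintro ⟨l, hl, rfl, rfl⟩
    exact ⟨fun i => ⟨l.get i, hl _ (l.get_mem i)⟩, by simp⟩
  · rintro ⟨f, rfl⟩
    exact ⟨_, by simp [List.mem_ofFn], rfl, List.length_ofFn⟩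

theorem isMinWordLen_iff_isLeast {n : ℕ} {hn : 2 ≤ n} {g : Perm (Fin n)} {d : ℕ} :
    IsMinWordLen n hn g d ↔ IsLeast {k | g ∈ gens n hn ^ k} d := by
  refine and_congr exists_list_prod_iff_mem_pow ?_
  simp only [mem_lowerBounds, Set.mem_ofPred_eq, ← exists_list_prod_iff_mem_pow]
  exact ⟨fun h k ⟨l, hl, hprod, hlen⟩ => hlen ▸ h l hl hprod,
    fun h l hl hprod => h _ ⟨l, hl, hprod, rfl⟩⟩

theorem two_mul_le_of_mem_pow {G : Type*} [Group G] {s r : G} {f : G → ℕ} (hs : s * s = 1)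
    (f_one : f 1 = 0) (f_s_mul : ∀ g, f (s * g) ≤ f g + 1) (f_r_mul : ∀ g, f (r * g) = f g)
    {d : ℕ} {g : G} (hg : g ∈ ({s, r, r⁻¹} : Set G) ^ d) : 2 * f g ≤ d + 1 := by
  have f_r_inv_mul (g : G) : f (r⁻¹ * g) = f g := by rw [← f_r_mul, mul_inv_cancel_left]
  -- Two adjacent letters `s` cancel; carrying `f (s * g)` along keeps track of this cancellation.
  suffices 2 * f g ≤ d + 1 ∧ f g + f (s * g) ≤ d + 1 from this.1
  induction d generalizing g with
  | zero =>
    obtain rfl : g = 1 := by simpa using hg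
    have := f_s_mul 1
    omega
  | succ d ih =>
    rw [pow_succ'] at hg
    obtain ⟨x, hx, h, hh, rfl⟩ := hg
    obtain ⟨h_two, h_add⟩ := ih hh
    have h_s := f_s_mul h
    rcases hx with rfl | rfl | rfl
    · simp only [← mul_assoc, hs, one_mul]
      omega
    · have := f_s_mul (x * h)
      simp only [f_r_mul] at this ⊢
      omega
    · have := f_s_mul (r⁻¹ * h)
      simp only [f_r_inv_mul] at this ⊢
      omega

section PairSums

variable {ι : Type*} [LinearOrder ι]

theorem sum_sum_filter_lt_add {M : Type*} [AddCommMonoid M] (s : Finset ι) (f : ι → M) :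
    ∑ k ∈ s, ∑ i ∈ s with i < k, (f i + f k) = (#s - 1) • ∑ k ∈ s, f k := by
  have h_swap : ∑ k ∈ s, ∑ i ∈ s with i < k, f i = ∑ k ∈ s, ∑ i ∈ s with k < i, f k :=
    sum_comm' (by simp only [mem_filter]; tauto)
  have h_card {k : ι} (hk : k ∈ s) : #{i ∈ s | k < i} + #{i ∈ s | i < k} = #s - 1 := by
    rw [← card_erase_of_mem hk, ← card_union_of_disjoint]
    · congr 1
      grind
    · exact disjoint_filter.2 fun i _ h => h.le.not_gt
  simp only [sum_add_distrib, h_swap, sum_const]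
  rw [← sum_add_distrib, smul_sum]
  exact sum_congr rfl fun k hk => by rw [← add_smul, h_card hk]

theorem sum_card_filter_lt (s : Finset ι) : ∑ k ∈ s, #{i ∈ s | i < k} = (#s).choose 2 := by
  have h := sum_sum_filter_lt_add s fun _ => 1
  simp only [sum_const, smul_eq_mul, ← sum_mul, mul_one] at h
  rw [Nat.choose_two_right, mul_comm #s, ← h, one_add_one_eq_two, Nat.mul_div_cancel _ two_pos]

section OrderedGroup

variable {R : Type*} [AddCommGroup R] [LinearOrder R] [IsOrderedAddMonoid R]

theorem sum_sum_filter_lt_abs_sub_le (s : Finset ι) (x : ι → R) (y : R) :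
    ∑ k ∈ s, ∑ i ∈ s with i < k, |x k - x i| ≤ (#s - 1) • ∑ i ∈ s, |y - x i| := by
  rw [← sum_sum_filter_lt_add]
  gcongr with k _ i _
  rw [add_comm, abs_sub_comm y (x k)]
  exact abs_sub_le ..

theorem sum_sum_filter_lt_abs_sub_le_sum_sum {s t : Finset ι} (hst : #s - 1 ≤ #t) (x : ι → R) :
    ∑ k ∈ s, ∑ i ∈ s with i < k, |x k - x i| ≤ ∑ m ∈ t, ∑ i ∈ s, |x m - x i| := by
  set T := ∑ k ∈ s, ∑ i ∈ s with i < k, |x k - x i|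
  have hT (y : R) : T ≤ (#s - 1) • ∑ i ∈ s, |y - x i| := sum_sum_filter_lt_abs_sub_le s x y
  rcases eq_or_ne (#s - 1) 0 with h | h
  · calc T ≤ 0 := by simpa [h] using hT 0
      _ ≤ _ := sum_nonneg fun _ _ => sum_nonneg fun _ _ => abs_nonneg _
  · -- Average the bound of `T` over the centres `x m` with `m ∈ t`.
    refine le_of_nsmul_le_nsmul_right h ?_
    calc (#s - 1) • T ≤ #t • T :=
          nsmul_le_nsmul_left (sum_nonneg fun _ _ => sum_nonneg fun _ _ => abs_nonneg _) hst
      _ = ∑ _ ∈ t, T := (sum_const T).symm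
      _ ≤ ∑ m ∈ t, (#s - 1) • ∑ i ∈ s, |x m - x i| := sum_le_sum fun m _ => hT (x m)
      _ = (#s - 1) • ∑ m ∈ t, ∑ i ∈ s, |x m - x i| := (smul_sum ..).symm

end OrderedGroup

theorem choose_two_le_sum_sum_Iio_abs {R : Type*} [Ring R] [LinearOrder R] [IsOrderedRing R]
    [Fintype ι] [LocallyFiniteOrderBot ι] {s : Finset ι} (hs : IsLowerSet (s : Set ι))
    (hcard : #s - 1 ≤ #sᶜ) (x : ι → R) :
    ((#s).choose 2 : R) ≤ ∑ k, ∑ i ∈ Iio k, |x k - x i - if k ∈ s then 1 else 0| := by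
  have h_inside {k : ι} (hk : k ∈ s) : {i ∈ s | i < k} = Iio k := by
    ext i
    simpa using fun hik => hs hik.le hk
  have h_below {k : ι} (hk : k ∈ sᶜ) : s ⊆ Iio k := fun i hi =>
    mem_Iio.2 <| lt_of_not_ge fun hki => mem_compl.1 hk (hs hki hi)
  have h_one (z : R) : 1 ≤ |z - 1| + |z| := by
    simpa [abs_sub_comm] using abs_sub_le 1 z 0
  calc ((#s).choose 2 : R) = ∑ k ∈ s, ∑ i ∈ s with i < k, 1 := by
        simp [← sum_card_filter_lt]
    _ ≤ ∑ k ∈ s, ∑ i ∈ s with i < k, (|x k - x i - 1| + |x k - x i|) := by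
        gcongr
        exact h_one _
    _ = (∑ k ∈ s, ∑ i ∈ s with i < k, |x k - x i - 1|) +
          ∑ k ∈ s, ∑ i ∈ s with i < k, |x k - x i| := by simp only [sum_add_distrib]
    _ ≤ (∑ k ∈ s, ∑ i ∈ s with i < k, |x k - x i - 1|) + ∑ k ∈ sᶜ, ∑ i ∈ s, |x k - x i| := by
        gcongr
        exact sum_sum_filter_lt_abs_sub_le_sum_sum hcard x
    _ ≤ (∑ k ∈ s, ∑ i ∈ Iio k, |x k - x i - if k ∈ s then 1 else 0|) +
          ∑ k ∈ sᶜ, ∑ i ∈ Iio k, |x k - x i - if k ∈ s then 1 else 0| := by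
        refine add_le_add (sum_le_sum fun k hk => ?_) (sum_le_sum fun k hk => ?_)
        · rw [h_inside hk, if_pos hk]
        · simp only [if_neg (mem_compl.1 hk), sub_zero]
          exact sum_le_sum_of_subset_of_nonneg (h_below hk) fun _ _ _ => abs_nonneg _
    _ = _ := sum_add_sum_compl ..

theorem sum_sum_Iio_ite_sym2_le_one {α : Type*} [DecidableEq α] [Fintype ι]
    [LocallyFiniteOrderBot ι] {g : ι → α} (hg : Function.Injective g) (z : Sym2 α) :
    ∑ k, ∑ i ∈ Iio k, (if s(g i, g k) = z then 1 else 0) ≤ 1 := by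
  rw [sum_sigma', sum_boole, Nat.cast_id, card_le_one]
  rintro ⟨k, i⟩ h ⟨k', i'⟩ h'
  simp only [mem_filter, mem_sigma, mem_univ, mem_Iio, true_and] at h h'
  have h_eq := h.2.trans h'.2.symm
  simp only [Sym2.eq_iff, hg.eq_iff] at h_eq
  rcases h_eq with ⟨rfl, rfl⟩ | ⟨rfl, rfl⟩
  · rfl
  · exact absurd h.1 h'.1.asymm

end PairSums

theorem sub_ediv_of_pos {d : ℤ} (hd : 0 < d) (x y : ℤ) :
    (x - y) / d = x / d - y / d - if x % d < y % d then 1 else 0 := by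
  have h_split : x - y = (x % d - y % d) + d * (x / d - y / d) := by
    rw [Int.emod_def, Int.emod_def]
    ring
  have hx := Int.emod_nonneg x hd.ne'
  have hx' := Int.emod_lt_of_pos x hd
  have hy := Int.emod_nonneg y hd.ne'
  have hy' := Int.emod_lt_of_pos y hd
  have h_residues : (x % d - y % d) / d = - if x % d < y % d then 1 else 0 := by
    split_ifs
    · exact Int.ediv_eq_neg_one_of_neg_of_le (by omega) (by omega)
    · exact Int.ediv_eq_zero_of_lt (by omega) (by omega)
  rw [h_split, Int.add_mul_ediv_left _ _ hd.ne', h_residues, neg_add_eq_sub]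

section Generators

variable {n : ℕ}

theorem val_finRotate (x : Fin n) :
    (finRotate n x : ℕ) = if (x : ℕ) + 1 = n then 0 else (x : ℕ) + 1 := by
  obtain _ | n := n
  · exact x.elim0
  · rw [coe_finRotate]
    simp [Fin.ext_iff]

theorem finRotate_modEq (x : Fin n) : ((finRotate n x : ℕ) : ℤ) ≡ (x : ℕ) + 1 [ZMOD n] := by
  rw [val_finRotate]
  split_ifs with h
  · simp [← h, Int.ModEq]
  · simp

theorem val_delta (hn : 2 ≤ n) (x : Fin n) :
    (delta n hn x : ℕ) = if (x : ℕ) = 0 then 1 else if (x : ℕ) = 1 then 0 else (x : ℕ) := by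
  simp only [delta, swap_apply_def, Fin.ext_iff, apply_ite Fin.val]

theorem delta_mul_self (hn : 2 ≤ n) : delta n hn * delta n hn = 1 :=
  swap_mul_self _ _

theorem delta_mem_gens (hn : 2 ≤ n) : delta n hn ∈ gens n hn := by simp [gens]

theorem finRotate_mem_gens (hn : 2 ≤ n) : finRotate n ∈ gens n hn := by simp [gens]

theorem inv_finRotate_mem_gens (hn : 2 ≤ n) : (finRotate n)⁻¹ ∈ gens n hn := by simp [gens]

theorem inv_gens (hn : 2 ≤ n) : (gens n hn)⁻¹ = gens n hn := by
  rw [gens, Set.inv_insert, Set.inv_insert, Set.inv_singleton, inv_inv, delta, swap_inv,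
    Set.pair_comm]

theorem delta_lt_delta_iff (hn : 2 ≤ n) {u v : Fin n}
    (h : s(u, v) ≠ s(⟨0, by omega⟩, ⟨1, by omega⟩)) :
    delta n hn u < delta n hn v ↔ u < v := by
  simp only [ne_eq, Sym2.eq_iff, Fin.ext_iff] at h
  simp only [Fin.lt_def, val_delta]
  grind

end Generators

section MinAffineInv

variable {n : ℕ}

/-- `w` is the window of an affine permutation of `ℤ` lying over `g`. As in the extended affine
symmetric group, the sum of the entries of `w` is unrestricted, so that shifts of `ℤ` lift the
powers of the rotation. -/
def IsAffineLift (w : Fin n → ℤ) (g : Perm (Fin n)) : Prop :=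
  ∀ i, w i ≡ (g i : ℕ) [ZMOD n]

/-- The number of inversions of the affine permutation with window `w`, in Shi's form: position
`k` forms `|⌊(w k - w i) / n⌋|` inversions with the translates of position `i < k`. -/
def affineInv (w : Fin n → ℤ) : ℕ :=
  ∑ k, ∑ i ∈ Iio k, ((w k - w i) / n).natAbs

/-- The least number of inversions of an affine permutation lying over `g`: the length of `g` when
rotations are free of charge. -/
noncomputable def minAffineInv (g : Perm (Fin n)) : ℕ :=
  sInf (affineInv '' {w | IsAffineLift w g})

variable {g : Perm (Fin n)} {w : Fin n → ℤ}

theorem isAffineLift_val (g : Perm (Fin n)) : IsAffineLift (fun i => (g i : ℕ)) g :=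
  fun _ => .rfl

theorem IsAffineLift.minAffineInv_le (h : IsAffineLift w g) : minAffineInv g ≤ affineInv w :=
  Nat.sInf_le ⟨w, h, rfl⟩

theorem exists_isAffineLift_affineInv_eq (g : Perm (Fin n)) :
    ∃ w, IsAffineLift w g ∧ affineInv w = minAffineInv g :=
  Nat.sInf_mem ⟨_, Set.mem_image_of_mem _ (isAffineLift_val g)⟩

theorem affineInv_add_const (w : Fin n → ℤ) (c : ℤ) :
    affineInv (fun i => w i + c) = affineInv w := by
  simp only [affineInv, add_sub_add_right_eq_sub]

theorem isAffineLift_finRotate_mul_iff :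
    IsAffineLift (fun i => w i + 1) (finRotate n * g) ↔ IsAffineLift w g :=
  forall_congr' fun i => ⟨fun h => (h.trans (finRotate_modEq (g i))).add_right_cancel' 1,
    fun h => (h.add_right 1).trans (finRotate_modEq (g i)).symm⟩

theorem minAffineInv_finRotate_mul (g : Perm (Fin n)) :
    minAffineInv (finRotate n * g) = minAffineInv g := by
  refine le_antisymm ?_ ?_
  · obtain ⟨w, hw, hmin⟩ := exists_isAffineLift_affineInv_eq g
    rw [← hmin, ← affineInv_add_const w 1]
    exact (isAffineLift_finRotate_mul_iff.2 hw).minAffineInv_le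
  · obtain ⟨w, hw, hmin⟩ := exists_isAffineLift_affineInv_eq (finRotate n * g)
    rw [← hmin, ← affineInv_add_const w (-1)]
    exact (isAffineLift_finRotate_mul_iff.1 (by simpa using hw)).minAffineInv_le

theorem minAffineInv_finRotate_pow_mul (k : ℕ) (g : Perm (Fin n)) :
    minAffineInv (finRotate n ^ k * g) = minAffineInv g := by
  induction k with
  | zero => simp
  | succ k ih => rw [pow_succ', mul_assoc, minAffineInv_finRotate_mul, ih]

theorem minAffineInv_one : minAffineInv (1 : Perm (Fin n)) = 0 := by
  refine Nat.le_zero.1 ((isAffineLift_val 1).minAffineInv_le.trans_eq ?_)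
  refine sum_eq_zero fun k _ => sum_eq_zero fun i hi => ?_
  have hik : i < k := mem_Iio.1 hi
  simp only [Perm.one_apply, Int.natAbs_eq_zero]
  exact Int.ediv_eq_zero_of_lt (by omega) (by omega)

theorem IsAffineLift.emod_eq (h : IsAffineLift w g) (i : Fin n) : w i % n = (g i : ℕ) :=
  Eq.trans (h i) (Int.emod_eq_of_lt (by omega) (by omega))

theorem IsAffineLift.sub_ediv (h : IsAffineLift w g) (k i : Fin n) :
    (w k - w i) / n = w k / n - w i / n - if g k < g i then 1 else 0 := by
  rw [sub_ediv_of_pos (by have := k.pos; omega), h.emod_eq, h.emod_eq]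
  simp only [Nat.cast_lt, Fin.val_fin_lt]

theorem minAffineInv_delta_mul_le (hn : 2 ≤ n) (g : Perm (Fin n)) :
    minAffineInv (delta n hn * g) ≤ minAffineInv g + 1 := by
  obtain ⟨w, hw, hmin⟩ := exists_isAffineLift_affineInv_eq g
  let w' : Fin n → ℤ := fun i => n * (w i / n) + (delta n hn (g i) : ℕ)
  have hw' : IsAffineLift w' (delta n hn * g) := fun i => by simp [w', Int.ModEq]
  have hw'_ediv (i : Fin n) : w' i / n = w i / n := by
    have h_zero : ((delta n hn (g i) : ℕ) : ℤ) / n = 0 :=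
      Int.ediv_eq_zero_of_lt (by omega) (by omega)
    simp only [w']
    rw [Int.mul_add_ediv_left _ _ (by omega), h_zero, add_zero]
  calc minAffineInv (delta n hn * g) ≤ affineInv w' := hw'.minAffineInv_le
    _ ≤ affineInv w + ∑ k, ∑ i ∈ Iio k,
          if s(g i, g k) = s(⟨0, by omega⟩, ⟨1, by omega⟩) then 1 else 0 := by
        simp only [affineInv, ← sum_add_distrib]
        gcongr with k _ i _
        rw [hw'.sub_ediv, hw.sub_ediv, hw'_ediv, hw'_ediv]
        by_cases h : s(g i, g k) = s(⟨0, by omega⟩, ⟨1, by omega⟩)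
        · rw [if_pos h]
          split_ifs <;> omega
        · simp only [Perm.mul_apply, delta_lt_delta_iff hn (Sym2.eq_swap.trans_ne h), if_neg h,
            add_zero, le_refl]
    _ ≤ affineInv w + 1 := by
        gcongr
        exact sum_sum_Iio_ite_sym2_le_one g.injective _
    _ = minAffineInv g + 1 := by rw [hmin]

end MinAffineInv

section PrefixRev

variable {n j : ℕ}

/-- The permutation of positions reversing the first `j` of them: the one-line notation of
`π * prefixRev hj` is that of `π` with its first `j` entries reversed. -/
def prefixRev (hj : j ≤ n) : Perm (Fin n) :=
  Function.Involutive.toPerm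
    (fun p => if h : (p : ℕ) < j then ⟨j - 1 - p, by omega⟩ else p) fun p => by
      ext
      grind

theorem prefixRev_apply (hj : j ≤ n) (p : Fin n) :
    prefixRev hj p = if h : (p : ℕ) < j then ⟨j - 1 - p, by omega⟩ else p :=
  rfl

theorem val_prefixRev (hj : j ≤ n) (p : Fin n) :
    (prefixRev hj p : ℕ) = if (p : ℕ) < j then j - 1 - p else (p : ℕ) := by
  rw [prefixRev_apply]
  split_ifs <;> rfl

theorem inv_prefixRev (hj : j ≤ n) : (prefixRev hj)⁻¹ = prefixRev hj :=
  rfl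

theorem prefixRev_of_le_one (hj : j ≤ n) (hj1 : j ≤ 1) : prefixRev hj = 1 := by
  ext p
  rw [val_prefixRev, Perm.one_apply]
  split_ifs <;> omega

theorem prefixRev_add_two (hj : j + 2 ≤ n) :
    prefixRev hj = swap ⟨0, by omega⟩ ⟨j + 1, by omega⟩ *
      (finRotate n * prefixRev (j := j) (by omega) * (finRotate n)⁻¹) := by
  rw [← mul_assoc, eq_mul_inv_iff_mul_eq]
  ext p
  simp only [Perm.mul_apply, swap_apply_def, Fin.ext_iff, apply_ite Fin.val, val_prefixRev,
    val_finRotate]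
  grind

theorem prefixRev_lt_prefixRev_iff (hj : j ≤ n) {i k : Fin n} (hik : i < k) :
    prefixRev hj k < prefixRev hj i ↔ (k : ℕ) < j := by
  simp only [Fin.lt_def, val_prefixRev] at hik ⊢
  split_ifs <;> omega

theorem choose_two_le_minAffineInv_prefixRev (hj : j ≤ (n + 1) / 2) :
    j.choose 2 ≤ minAffineInv (prefixRev (n := n) (j := j) (by omega)) := by
  have hjn : j ≤ n := by omega
  obtain ⟨w, hw, hmin⟩ := exists_isAffineLift_affineInv_eq (prefixRev hjn)
  let s : Finset (Fin n) := {k | (k : ℕ) < j}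
  have hs_lower : IsLowerSet (s : Set (Fin n)) := fun k i hik hk => by
    simp only [s, coe_filter, mem_univ, true_and, Set.mem_ofPred_eq] at hk ⊢
    omega
  have hs_card : #s = j := by
    rw [Fin.card_filter_val_lt, min_eq_right (by omega)]
  have hs_card_compl : #s - 1 ≤ #sᶜ := by
    rw [card_compl, Fintype.card_fin, hs_card]
    omega
  rw [← hmin, ← Nat.cast_le (α := ℤ)]
  calc (j.choose 2 : ℤ) ≤ ∑ k, ∑ i ∈ Iio k, |w k / n - w i / n - if k ∈ s then 1 else 0| :=
        hs_card ▸ choose_two_le_sum_sum_Iio_abs hs_lower hs_card_compl fun i => w i / n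
    _ = (affineInv w : ℤ) := by
        simp only [affineInv, Nat.cast_sum, Int.natCast_natAbs]
        refine sum_congr rfl fun k _ => sum_congr rfl fun i hi => ?_
        simp only [hw.sub_ediv, prefixRev_lt_prefixRev_iff hjn (mem_Iio.1 hi), s, mem_filter,
          mem_univ, true_and]

theorem swap_zero_mem_gens_pow (hn : 2 ≤ n) (m : ℕ) (hm : m + 1 < n) :
    swap ⟨0, by omega⟩ ⟨m + 1, hm⟩ ∈ gens n hn ^ (4 * m + 1) := by
  induction m with
  | zero => simpa [delta] using delta_mem_gens hn
  | succ m ih =>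
    have h_conj : swap ⟨0, by omega⟩ ⟨m + 2, hm⟩ =
        delta n hn * (finRotate n * swap ⟨0, by omega⟩ ⟨m + 1, by omega⟩ * (finRotate n)⁻¹) *
          (delta n hn)⁻¹ := by
      rw [← swap_apply_apply, ← swap_apply_apply]
      congr 1 <;> ext <;> simp only [val_delta, val_finRotate] <;> grind
    have h_delta_inv : (delta n hn)⁻¹ ∈ gens n hn := by
      rw [← inv_gens hn]
      exact Set.inv_mem_inv.2 (delta_mem_gens hn)
    have h_exp : 4 * (m + 1) + 1 = 4 * m + 1 + 1 + 1 + 1 + 1 := by ring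
    rw [h_conj, h_exp, pow_succ, pow_succ', pow_succ, pow_succ']
    exact Set.mul_mem_mul (Set.mul_mem_mul (delta_mem_gens hn) (Set.mul_mem_mul
      (Set.mul_mem_mul (finRotate_mem_gens hn) (ih _)) (inv_finRotate_mem_gens hn))) h_delta_inv

theorem prefixRev_mul_finRotate_pow_mem_gens_pow (hn : 2 ≤ n) (hj : j + 2 ≤ n) :
    prefixRev hj * finRotate n ^ (j / 2) ∈ gens n hn ^ ((j + 2) * (j + 1) - 1) := by
  induction j using Nat.twoStepInduction with
  | zero =>
    simpa [prefixRev_add_two, prefixRev_of_le_one] using swap_zero_mem_gens_pow hn 0 (by omega)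
  | one =>
    simpa [prefixRev_add_two, prefixRev_of_le_one] using swap_zero_mem_gens_pow hn 1 (by omega)
  | more j ih _ =>
    have h_step : prefixRev hj * finRotate n ^ ((j + 2) / 2) =
        swap ⟨0, by omega⟩ ⟨j + 3, by omega⟩ *
          (finRotate n * (prefixRev (j := j + 2) (by omega) * finRotate n ^ (j / 2))) := by
      rw [prefixRev_add_two, Nat.add_div_right _ two_pos, pow_succ']
      group
    have h_exp : (j + 2 + 2) * (j + 2 + 1) - 1 =
        (4 * (j + 2) + 1) + ((j + 2) * (j + 1) - 1 + 1) := by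
      rw [Nat.sub_add_cancel (Nat.mul_pos (by omega) (by omega))]
      exact Nat.sub_eq_of_eq_add (by ring)
    rw [h_step, h_exp, pow_add, pow_succ' _ ((j + 2) * (j + 1) - 1)]
    exact Set.mul_mem_mul (swap_zero_mem_gens_pow hn (j + 2) (by omega))
      (Set.mul_mem_mul (finRotate_mem_gens hn) (ih (by omega)))

theorem le_of_prefixRev_mul_finRotate_pow_mem_gens_pow (hn : 2 ≤ n) (hj : j ≤ (n + 1) / 2)
    {k d : ℕ} (h : prefixRev (by omega : j ≤ n) * finRotate n ^ k ∈ gens n hn ^ d) :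
    j * (j - 1) - 1 ≤ d := by
  have h_inv : (finRotate n ^ k)⁻¹ * prefixRev (by omega : j ≤ n) ∈ gens n hn ^ d := by
    rw [← inv_gens hn, inv_pow, ← Set.inv_mem_inv, inv_inv]
    rwa [mul_inv_rev, inv_inv, inv_prefixRev]
  have h_lower : 2 * minAffineInv ((finRotate n ^ k)⁻¹ * prefixRev (by omega : j ≤ n)) ≤ d + 1 :=
    two_mul_le_of_mem_pow (delta_mul_self hn) minAffineInv_one (minAffineInv_delta_mul_le hn)
      minAffineInv_finRotate_mul h_inv
  rw [← minAffineInv_finRotate_pow_mul k, mul_inv_cancel_left] at h_lower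
  have h_choose := choose_two_le_minAffineInv_prefixRev hj
  have h_two : j.choose 2 * 2 = j * (j - 1) := by
    rw [Nat.choose_two_right, Nat.div_mul_cancel (Nat.even_mul_pred_self j).two_dvd]
  omega

end PrefixRev

/-- For `n ≥ 3`, `2 ≤ j ≤ ⌈n/2⌉`, any `π ∈ S_n`, and `ξ` the
permutation whose one-line notation reverses the first `j` entries of `π` and
agrees with `π` elsewhere, the word metric with respect to `{(1 2), r, r⁻¹}`
(`r = (1 2 … n)`) satisfies `dist(π, ξ r^(⌊j/2⌋ - 1)) = j(j-1) - 1`. -/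
theorem stmt14 (n : ℕ) (hn : 3 ≤ n) (j : ℕ) (hj1 : 2 ≤ j) (hj2 : j ≤ (n + 1) / 2)
    (π ξ : Equiv.Perm (Fin n))
    (hξ : ∀ p : Fin n, ξ p =
      if h : (p : ℕ) < j then π ⟨j - 1 - (p : ℕ), by omega⟩ else π p) :
    IsMinWordLen n (by omega) (π⁻¹ * (ξ * (finRotate n) ^ (j / 2 - 1)))
      (j * (j - 1) - 1) := by
  have hjn : j ≤ n := by omega
  have hξ_eq : ξ = π * prefixRev hjn := by
    ext p
    rw [hξ, Perm.mul_apply, prefixRev_apply]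
    split_ifs <;> rfl
  rw [hξ_eq, mul_assoc, inv_mul_cancel_left, isMinWordLen_iff_isLeast]
  refine ⟨?_, fun d hd => le_of_prefixRev_mul_finRotate_pow_mem_gens_pow _ hj2 hd⟩
  obtain ⟨m, rfl⟩ := Nat.exists_eq_add_of_le' hj1
  have h_exp : (m + 2) / 2 - 1 = m / 2 := by omega
  rw [h_exp]
  exact prefixRev_mul_finRotate_pow_mem_gens_pow _ hjn
end
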